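/- Let Q be a nonempty finite set, μ a probability distribution on Q, C a positive integer, and E a complex inner product space. Let f : Q^C → E, let M := E_{q∼μ^C}[f(q)], and for i ∈ {1,…,C} and q_i ∈ Q let M_{i,q_i} be the expectation of f(q) over q ∼ μ^C conditioned on coordinate i equaling q_i. Then E_{q∼μ^C}[ ‖ f(q) − ∑_{i=1}^C (M_{i,q_i} − M) ‖² ] = E_{q∼μ^C}[‖f(q)‖²] − ∑_{i=1}^C E_{q_i∼μ}[‖M − M_{i,q_i}‖²]. -/

import Mathlib

theorem aux_resample {Q : Type*} [Fintype Q] [DecidableEq Q]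
    (w : Q → ℝ) (hw1 : ∑ q, w q = 1) (C : ℕ)
    {V : Type*} [AddCommGroup V] [Module ℝ V]
    (h : (Fin C → Q) → V) (i : Fin C) :
    ∑ q : Fin C → Q, (∏ j, w (q j)) • h q =
      ∑ a, w a • ∑ q : Fin C → Q, (∏ j, w (q j)) • h (Function.update q i a) := by
  have h1 : ∑ q : Fin C → Q, (∏ j, w (q j)) • h q =
      ∑ p : Q × (Fin C → Q), (w p.1 * ∏ j, w (p.2 j)) • h p.2 := by
    rw [Fintype.sum_prod_type_right]
    refine Finset.sum_congr rfl fun q _ => ?_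
    simp only
    rw [← Finset.sum_smul, ← Finset.sum_mul, hw1, one_mul]
  have h2 : ∑ a, w a • ∑ q : Fin C → Q, (∏ j, w (q j)) • h (Function.update q i a) =
      ∑ p : Q × (Fin C → Q), (w p.1 * ∏ j, w (p.2 j)) • h (Function.update p.2 i p.1) := by
    rw [Fintype.sum_prod_type]
    simp only [Finset.smul_sum, smul_smul]
  rw [h1, h2]
  have hinv : Function.Involutive
      (fun p : Q × (Fin C → Q) => (p.2 i, Function.update p.2 i p.1)) := by
    rintro ⟨a, q⟩
    simp
  refine Fintype.sum_equiv hinv.toPerm _ _ ?_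
  rintro ⟨a, q⟩
  simp only [Function.Involutive.coe_toPerm, Function.update_idem, Function.update_eq_self]
  congr 1
  rw [← Finset.mul_prod_erase Finset.univ (fun j => w (q j)) (Finset.mem_univ i),
    ← Finset.mul_prod_erase Finset.univ (fun j => w (Function.update q i a j))
      (Finset.mem_univ i)]
  have : ∏ j ∈ Finset.univ.erase i, w (Function.update q i a j) =
      ∏ j ∈ Finset.univ.erase i, w (q j) := by
    refine Finset.prod_congr rfl fun j hj => ?_
    rw [Function.update_of_ne (Finset.ne_of_mem_erase hj)]
  rw [this]
  simp only [Function.update_self]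
  ring

theorem aux_total {Q : Type*} [Fintype Q] (w : Q → ℝ) (hw1 : ∑ q, w q = 1) (C : ℕ) :
    ∑ q : Fin C → Q, (∏ j, w (q j)) = 1 := by
  classical
  rw [← Fintype.piFinset_univ, Finset.sum_prod_piFinset (s := Finset.univ) (g := fun _ a => w a)]
  simp [hw1]

theorem aux_inner {Q : Type*} [Fintype Q] [DecidableEq Q]
    (w : Q → ℝ) (hw1 : ∑ q, w q = 1) (C : ℕ)
    {E : Type*} [NormedAddCommGroup E] [InnerProductSpace ℝ E]
    (h : (Fin C → Q) → E) (g : Q → E) (i : Fin C) :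
    ∑ q : Fin C → Q, (∏ j, w (q j)) * inner ℝ (h q) (g (q i)) =
      ∑ a, w a * inner ℝ (∑ q : Fin C → Q, (∏ j, w (q j)) • h (Function.update q i a)) (g a) := by
  have := aux_resample w hw1 C (fun q => inner ℝ (h q) (g (q i))) i
  simp only [smul_eq_mul, Function.update_self] at this
  rw [this]
  simp only [sum_inner, real_inner_smul_left]

theorem aux_real {Q : Type*} [Fintype Q] [DecidableEq Q]
    (w : Q → ℝ) (hw1 : ∑ q, w q = 1) (C : ℕ)
    {E : Type*} [NormedAddCommGroup E] [InnerProductSpace ℝ E]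
    (f : (Fin C → Q) → E) (M : E) (Mi : Fin C → Q → E)
    (hM : M = ∑ q : Fin C → Q, (∏ i, w (q i)) • f q)
    (hMi : ∀ i a, Mi i a = ∑ q : Fin C → Q, (∏ j, w (q j)) • f (Function.update q i a)) :
    ∑ q : Fin C → Q, (∏ i, w (q i)) * ‖f q - ∑ i : Fin C, (Mi i (q i) - M)‖ ^ 2 =
      ∑ q : Fin C → Q, (∏ i, w (q i)) * ‖f q‖ ^ 2
        - ∑ i : Fin C, ∑ qi : Q, w qi * ‖M - Mi i qi‖ ^ 2 := by
  have hW := aux_total w hw1 C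
  obtain ⟨g, hg⟩ : ∃ g : Fin C → Q → E, ∀ i a, g i a = Mi i a - M := ⟨_, fun _ _ => rfl⟩
  have hg0 : ∀ i, ∑ a, w a • g i a = 0 := by
    intro i
    simp only [hg, smul_sub, Finset.sum_sub_distrib, ← Finset.sum_smul, hw1, one_smul, hMi]
    rw [← aux_resample w hw1 C f i, ← hM, sub_self]
  have hgE : ∀ i, ∑ q : Fin C → Q, (∏ j, w (q j)) • g i (q i) = 0 := by
    intro i
    rw [aux_resample w hw1 C (fun q => g i (q i)) i]
    simp only [Function.update_self, ← Finset.sum_smul, hW, one_smul, hg0]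
  have hS : ∀ i a, ∑ q : Fin C → Q, (∏ j, w (q j)) • ∑ k, g k (Function.update q i a k)
      = g i a := by
    intro i a
    simp only [Finset.smul_sum]
    rw [Finset.sum_comm, Finset.sum_eq_single i]
    · simp only [Function.update_self, ← Finset.sum_smul, hW, one_smul]
    · intro k _ hk
      simp only [Function.update_of_ne hk, hgE]
    · simp
  have hfS : ∑ q : Fin C → Q, (∏ j, w (q j)) * inner ℝ (f q) (∑ i, g i (q i)) =
      ∑ i, ∑ a, w a * ‖M - Mi i a‖ ^ 2 := by
    simp only [inner_sum, Finset.mul_sum]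
    rw [Finset.sum_comm]
    refine Finset.sum_congr rfl fun i _ => ?_
    rw [aux_inner w hw1 C f (g i) i]
    have h0 : ∑ a, w a * inner ℝ M (g i a) = 0 := by
      have := congrArg (fun x => inner ℝ M x) (hg0 i)
      simpa only [inner_sum, real_inner_smul_right, inner_zero_right] using this
    rw [← sub_zero (∑ a, _), ← h0, ← Finset.sum_sub_distrib]
    refine Finset.sum_congr rfl fun a _ => ?_
    rw [← hMi, ← mul_sub, ← inner_sub_left, ← hg, real_inner_self_eq_norm_sq, hg, norm_sub_rev]
  have hSS : ∑ q : Fin C → Q, (∏ j, w (q j)) * ‖∑ i, g i (q i)‖ ^ 2 =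
      ∑ i, ∑ a, w a * ‖M - Mi i a‖ ^ 2 := by
    have : ∀ q : Fin C → Q, ‖∑ i, g i (q i)‖ ^ 2 =
        ∑ i, inner ℝ (∑ k, g k (q k)) (g i (q i)) := by
      intro q
      rw [← inner_sum, real_inner_self_eq_norm_sq]
    simp only [this, Finset.mul_sum]
    rw [Finset.sum_comm]
    refine Finset.sum_congr rfl fun i _ => ?_
    rw [aux_inner w hw1 C (fun q => ∑ k, g k (q k)) (g i) i]
    refine Finset.sum_congr rfl fun a _ => ?_
    rw [hS, real_inner_self_eq_norm_sq, hg, norm_sub_rev]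
  rw [← hfS] at hSS ⊢
  simp only [← hg, norm_sub_sq_real, mul_add, mul_sub, Finset.sum_add_distrib,
    Finset.sum_sub_distrib]
  rw [hSS]
  have : ∑ q : Fin C → Q, (∏ j, w (q j)) * (2 * inner ℝ (f q) (∑ i, g i (q i))) =
      2 * ∑ q : Fin C → Q, (∏ j, w (q j)) * inner ℝ (f q) (∑ i, g i (q i)) := by
    rw [Finset.mul_sum]
    exact Finset.sum_congr rfl fun q _ => by ring
  rw [this]
  ring


/-- The orthogonal-decomposition identity in the proof of Claim A.1:
`E_q‖f(q) − ∑_i (M_{i,q_i} − M)‖² = E_q‖f(q)‖² − ∑_i E_{q_i}‖M − M_{i,q_i}‖²`. -/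
theorem claimA1_decomposition {Q : Type*} [Fintype Q] [Nonempty Q] [DecidableEq Q]
    (w : Q → ℝ) (hw : ∀ q, 0 ≤ w q) (hw1 : ∑ q, w q = 1)
    (C : ℕ) (hC : 0 < C)
    {E : Type*} [NormedAddCommGroup E] [InnerProductSpace ℂ E]
    (f : (Fin C → Q) → E) :
    let M := ∑ q : Fin C → Q, (∏ i, w (q i)) • f q
    let Mi := fun (i : Fin C) (qi : Q) =>
      ∑ q : Fin C → Q, (∏ j, w (q j)) • f (Function.update q i qi)
    ∑ q : Fin C → Q, (∏ i, w (q i)) * ‖f q - ∑ i : Fin C, (Mi i (q i) - M)‖ ^ 2 =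
      ∑ q : Fin C → Q, (∏ i, w (q i)) * ‖f q‖ ^ 2
        - ∑ i : Fin C, ∑ qi : Q, w qi * ‖M - Mi i qi‖ ^ 2 := by
  intro M Mi
  letI : InnerProductSpace ℝ E := InnerProductSpace.complexToReal
  exact aux_real w hw1 C f M Mi rfl (fun _ _ => rfl)
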